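/- Let e₁, e₂, e₃ be orthonormal vectors in E, let φ ∈ (0,π/2), and set v = sin φ e₂ + cos φ e₃. Then the curve ζ(t) = cosh(t/2) e₁ − sin φ (cos²φ + sin²φ cosh(t/2)) sinh(t/2) e₂ − cos φ sin²φ (cosh(t/2) − 1) sinh(t/2) e₃ satisfies the Jacobi equation 4ζ''(t) − ζ(t) − 3⟨ζ(t),v⟩v = 0 for all t ∈ ℝ, with initial conditions ζ(0) = e₁ and ζ'(0) = −(1/2)(sin φ) e₂. (This is the Jacobi field ζ_Z along a normal geodesic to W_w, written in the parallel frame (Z, P̄ξ, F̄ξ) with v representing Jξ.) -/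

import Mathlib

/- Context: `E` is a real inner product space with a fixed unit vector `v`
(representing `Jγ̇` in a parallel orthonormal frame along a unit-speed geodesic `γ`
of `ℂH^n` of constant holomorphic sectional curvature `−1`). A smooth curve
`ζ : ℝ → E` satisfies the Jacobi equation of `ℂH^n` if
`4ζ'' − ζ − 3⟨ζ,v⟩v = 0`. -/

open scoped RealInnerProductSpace
open Real

/-!
In a parallel frame the Jacobi equation of `ℂH^n` is the linear equation `ζ'' = A ζ` with constant
coefficients, where `A w = (w + 3⟨v, w⟩v) / 4` has eigenvalue `(1/2)²` on `v^⊥` and `1²` on `ℝv`.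
Splitting the initial data along these eigenspaces gives the Jacobi field as
`cosh(t/2) x + sinh(t/2) y` on `v^⊥` plus `cosh(t) x' + sinh(t) y'` on `ℝv`. For the initial data
`e₁` and `-(sin φ / 2) e₂`, rewriting `sinh t` as `2 sinh(t/2) cosh(t/2)` turns this into `ζ_Z`.
-/

section HyperbolicCurve

variable {E : Type*} [NormedAddCommGroup E] [NormedSpace ℝ E]

/-- The solution of `ζ'' = κ² ζ` in a vector space with `ζ(0) = x` and `ζ'(0) = κ y`. With the
velocity normalised in this way, differentiation swaps `x` and `y` up to the factor `κ`. -/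
noncomputable def hyperbolicCurve (κ : ℝ) (x y : E) (t : ℝ) : E :=
  cosh (κ * t) • x + sinh (κ * t) • y

variable (κ : ℝ) (x y : E)

theorem hyperbolicCurve_zero : hyperbolicCurve κ x y 0 = x := by
  simp [hyperbolicCurve]

theorem hasDerivAt_hyperbolicCurve (t : ℝ) :
    HasDerivAt (hyperbolicCurve κ x y) (κ • hyperbolicCurve κ y x t) t := by
  have hκ : HasDerivAt (fun s => κ * s) κ t := hasDerivAt_const_mul κ
  refine ((hκ.cosh.smul_const x).add (hκ.sinh.smul_const y)).congr_deriv ?_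
  unfold hyperbolicCurve
  module

theorem deriv_hyperbolicCurve :
    deriv (hyperbolicCurve κ x y) = κ • hyperbolicCurve κ y x :=
  funext fun t => (hasDerivAt_hyperbolicCurve κ x y t).deriv

end HyperbolicCurve

section IsJacobiField

variable {E : Type*} [NormedAddCommGroup E] [NormedSpace ℝ E]

/-- The Jacobi equation `ζ'' = A ζ` along a geodesic of a locally symmetric space, written in a
parallel frame. The operator `A` is *minus* the Jacobi operator `R(·, γ̇)γ̇`; it is constant because
the curvature tensor is parallel. Differentiability is part of the definition, so that `deriv` does
not take junk values. -/
structure IsJacobiField (A : E →ₗ[ℝ] E) (ζ : ℝ → E) : Prop where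
  differentiable : Differentiable ℝ ζ
  hasDerivAt_deriv : ∀ t, HasDerivAt (deriv ζ) (A (ζ t)) t

theorem IsJacobiField.add {A : E →ₗ[ℝ] E} {ζ η : ℝ → E} (hζ : IsJacobiField A ζ)
    (hη : IsJacobiField A η) : IsJacobiField A (ζ + η) where
  differentiable := hζ.differentiable.add hη.differentiable
  hasDerivAt_deriv t := by
    have hderiv : deriv (ζ + η) = deriv ζ + deriv η :=
      funext fun s => deriv_add (hζ.differentiable s) (hη.differentiable s)
    rw [hderiv, Pi.add_apply, map_add]
    exact (hζ.hasDerivAt_deriv t).add (hη.hasDerivAt_deriv t)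

theorem isJacobiField_hyperbolicCurve {A : E →ₗ[ℝ] E} {κ : ℝ} {x y : E}
    (hx : A x = κ ^ 2 • x) (hy : A y = κ ^ 2 • y) :
    IsJacobiField A (hyperbolicCurve κ x y) where
  differentiable t := (hasDerivAt_hyperbolicCurve κ x y t).differentiableAt
  hasDerivAt_deriv t := by
    rw [deriv_hyperbolicCurve]
    refine ((hasDerivAt_hyperbolicCurve κ y x t).const_smul κ).congr_deriv ?_
    simp only [hyperbolicCurve, map_add, map_smul, hx, hy]
    module

end IsJacobiField

section ComplexHyperbolic

variable {E : Type*} [NormedAddCommGroup E] [InnerProductSpace ℝ E] {v : E}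

/-- Minus the Jacobi operator `R(·, γ̇)γ̇` of `ℂH^n` of holomorphic sectional curvature `-1`, on
the orthogonal complement of `γ̇`, as a function of `v = Jγ̇`. -/
noncomputable def negJacobiOperator (v : E) : E →ₗ[ℝ] E :=
  (4⁻¹ : ℝ) • (LinearMap.id + (3 : ℝ) • (innerₛₗ ℝ v).smulRight v)

theorem negJacobiOperator_apply (v w : E) :
    negJacobiOperator v w = (4⁻¹ : ℝ) • (w + (3 : ℝ) • ⟪v, w⟫ • v) := rfl

theorem negJacobiOperator_of_inner_eq_zero {w : E} (hw : ⟪v, w⟫ = 0) :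
    negJacobiOperator v w = (1 / 2 : ℝ) ^ 2 • w := by
  rw [negJacobiOperator_apply, hw]
  module

theorem negJacobiOperator_smul_self (hv : ‖v‖ = 1) (a : ℝ) :
    negJacobiOperator v (a • v) = (1 : ℝ) ^ 2 • a • v := by
  rw [negJacobiOperator_apply, real_inner_smul_right, inner_self_eq_one_of_norm_eq_one hv]
  module

theorem inner_sub_inner_smul_self (hv : ‖v‖ = 1) (w : E) : ⟪v, w - ⟪v, w⟫ • v⟫ = 0 := by
  rw [inner_sub_right, real_inner_smul_right, inner_self_eq_one_of_norm_eq_one hv, mul_one,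
    sub_self]

/-- The Jacobi field of `ℂH^n` with initial value `p` and initial velocity `q`, for a unit vector
`v = Jγ̇`, built from the components of `p` and `q` in `v^⊥` and `ℝv`. -/
noncomputable def complexHyperbolicJacobiField (v p q : E) : ℝ → E :=
  hyperbolicCurve (1 / 2) (p - ⟪v, p⟫ • v) ((2 : ℝ) • (q - ⟪v, q⟫ • v)) +
    hyperbolicCurve 1 (⟪v, p⟫ • v) (⟪v, q⟫ • v)

theorem isJacobiField_complexHyperbolicJacobiField (hv : ‖v‖ = 1) (p q : E) :
    IsJacobiField (negJacobiOperator v) (complexHyperbolicJacobiField v p q) := by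
  have hperp (w : E) : negJacobiOperator v (w - ⟪v, w⟫ • v) = (1 / 2 : ℝ) ^ 2 • (w - ⟪v, w⟫ • v) :=
    negJacobiOperator_of_inner_eq_zero (inner_sub_inner_smul_self hv w)
  refine (isJacobiField_hyperbolicCurve (hperp p) ?_).add
    (isJacobiField_hyperbolicCurve (negJacobiOperator_smul_self hv _)
      (negJacobiOperator_smul_self hv _))
  rw [map_smul, hperp, smul_comm]

theorem complexHyperbolicJacobiField_zero (v p q : E) :
    complexHyperbolicJacobiField v p q 0 = p := by
  simp [complexHyperbolicJacobiField, hyperbolicCurve_zero]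

theorem deriv_complexHyperbolicJacobiField_zero (v p q : E) :
    deriv (complexHyperbolicJacobiField v p q) 0 = q := by
  refine ((hasDerivAt_hyperbolicCurve _ _ _ 0).add
    (hasDerivAt_hyperbolicCurve _ _ _ 0)).deriv.trans ?_
  rw [hyperbolicCurve_zero, hyperbolicCurve_zero]
  module

theorem complexHyperbolicJacobiField_of_inner_eq_zero {p : E} (hp : ⟪v, p⟫ = 0) (q : E) (t : ℝ) :
    complexHyperbolicJacobiField v p q t =
      cosh (t / 2) • p + (2 * sinh (t / 2)) • (q + (⟪v, q⟫ * (cosh (t / 2) - 1)) • v) := by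
  have hsinh : sinh t = 2 * sinh (t / 2) * cosh (t / 2) := by
    rw [← sinh_two_mul, mul_div_cancel₀ t two_ne_zero]
  simp only [complexHyperbolicJacobiField, hyperbolicCurve, Pi.add_apply, hp, one_mul,
    one_div_mul_eq_div, hsinh]
  module

end ComplexHyperbolic

section Frame

variable {E : Type*} [NormedAddCommGroup E] [InnerProductSpace ℝ E] {e₂ e₃ : E}

theorem norm_sin_smul_add_cos_smul (h2 : ‖e₂‖ = 1) (h3 : ‖e₃‖ = 1) (h23 : ⟪e₂, e₃⟫ = 0) (φ : ℝ) :
    ‖sin φ • e₂ + cos φ • e₃‖ = 1 := by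
  have horth : ⟪sin φ • e₂, cos φ • e₃⟫ = 0 := by
    rw [real_inner_smul_left, real_inner_smul_right, h23, mul_zero, mul_zero]
  have hsq : ‖sin φ • e₂ + cos φ • e₃‖ ^ 2 = 1 := by
    rw [norm_add_sq_real, horth, norm_smul, norm_smul, h2, h3]
    simp
  exact (pow_eq_one_iff_of_nonneg (norm_nonneg _) two_ne_zero).mp hsq

theorem inner_sin_smul_add_cos_smul_left (h2 : ‖e₂‖ = 1) (h23 : ⟪e₂, e₃⟫ = 0) (φ : ℝ) :
    ⟪sin φ • e₂ + cos φ • e₃, e₂⟫ = sin φ := by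
  rw [inner_add_left, real_inner_smul_left, real_inner_smul_left, real_inner_comm e₂ e₃, h23,
    inner_self_eq_one_of_norm_eq_one h2, mul_one, mul_zero, add_zero]

end Frame

theorem jacobi_field_Z_general {E : Type*} [NormedAddCommGroup E] [InnerProductSpace ℝ E]
    {e₁ e₂ e₃ : E} (h2 : ‖e₂‖ = 1) (h3 : ‖e₃‖ = 1)
    (h12 : ⟪e₁, e₂⟫ = 0) (h13 : ⟪e₁, e₃⟫ = 0) (h23 : ⟪e₂, e₃⟫ = 0)
    {φ : ℝ} {v : E} (hv : v = sin φ • e₂ + cos φ • e₃) {ζ : ℝ → E}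
    (hζ : ∀ t, ζ t = cosh (t / 2) • e₁
      - (sin φ * (cos φ ^ 2 + sin φ ^ 2 * cosh (t / 2)) * sinh (t / 2)) • e₂
      - (cos φ * sin φ ^ 2 * (cosh (t / 2) - 1) * sinh (t / 2)) • e₃) :
    (∀ t : ℝ, (4 : ℝ) • deriv (deriv ζ) t - ζ t - (3 : ℝ) • ⟪ζ t, v⟫ • v = 0) ∧
    ζ 0 = e₁ ∧ deriv ζ 0 = -((2⁻¹ * sin φ) • e₂) := by
  have hv_norm : ‖v‖ = 1 := hv ▸ norm_sin_smul_add_cos_smul h2 h3 h23 φ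
  have hv₁ : ⟪v, e₁⟫ = 0 := by
    simp [hv, real_inner_comm e₁, inner_add_right, real_inner_smul_right, h12, h13]
  have hv₂ : ⟪v, e₂⟫ = sin φ := hv ▸ inner_sin_smul_add_cos_smul_left h2 h23 φ
  have hζ_eq : ζ = complexHyperbolicJacobiField v e₁ (-((2⁻¹ * sin φ) • e₂)) := by
    funext t
    rw [hζ, complexHyperbolicJacobiField_of_inner_eq_zero hv₁, inner_neg_right,
      real_inner_smul_right, hv₂, hv, cos_sq']
    module
  have hJacobi : IsJacobiField (negJacobiOperator v) ζ :=
    hζ_eq ▸ isJacobiField_complexHyperbolicJacobiField hv_norm _ _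
  refine ⟨fun t => ?_, ?_, ?_⟩
  · rw [(hJacobi.hasDerivAt_deriv t).deriv, negJacobiOperator_apply, real_inner_comm v (ζ t)]
    module
  · rw [hζ_eq, complexHyperbolicJacobiField_zero]
  · rw [hζ_eq, deriv_complexHyperbolicJacobiField_zero]

/-- let `e₁, e₂, e₃` be orthonormal vectors in `E`, `φ ∈ (0,π/2)`,
and `v = sin φ e₂ + cos φ e₃`. Then
`ζ(t) = cosh(t/2) e₁ − sin φ (cos²φ + sin²φ cosh(t/2)) sinh(t/2) e₂
− cos φ sin²φ (cosh(t/2) − 1) sinh(t/2) e₃` satisfies the Jacobi equation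
`4ζ''(t) − ζ(t) − 3⟨ζ(t),v⟩v = 0` for all `t ∈ ℝ`, with `ζ(0) = e₁` and
`ζ'(0) = −(1/2)(sin φ) e₂`. (This is the Jacobi field `ζ_Z` along a normal
geodesic to `W_w`, in the parallel frame `(Z, P̄ξ, F̄ξ)`, `v` representing `Jξ`.) -/
theorem jacobi_field_Z (E : Type*) [NormedAddCommGroup E]
    [InnerProductSpace ℝ E] (e₁ e₂ e₃ : E)
    (h1 : ‖e₁‖ = 1) (h2 : ‖e₂‖ = 1) (h3 : ‖e₃‖ = 1)
    (h12 : ⟪e₁, e₂⟫ = 0) (h13 : ⟪e₁, e₃⟫ = 0) (h23 : ⟪e₂, e₃⟫ = 0)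
    (φ : ℝ) (hφ : φ ∈ Set.Ioo 0 (π / 2)) (v : E)
    (hv : v = sin φ • e₂ + cos φ • e₃) (ζ : ℝ → E)
    (hζ : ∀ t, ζ t = cosh (t / 2) • e₁
      - (sin φ * (cos φ ^ 2 + sin φ ^ 2 * cosh (t / 2)) * sinh (t / 2)) • e₂
      - (cos φ * sin φ ^ 2 * (cosh (t / 2) - 1) * sinh (t / 2)) • e₃) :
    (∀ t : ℝ, (4 : ℝ) • deriv (deriv ζ) t - ζ t - (3 : ℝ) • ⟪ζ t, v⟫ • v = 0) ∧
    ζ 0 = e₁ ∧ deriv ζ 0 = -((2⁻¹ * sin φ) • e₂) :=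
  jacobi_field_Z_general h2 h3 h12 h13 h23 hv hζ
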